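/- Let s₁, s₂ : ℝ² → (0,∞) and f : ℝ² → ℂ be smooth ℤ²-periodic functions (viewed as functions on [0,1)²). Then there exists a constant C > 0 such that for every N ≥ 1, the operator norm bound ‖Op^{AW,s₁}_N(f) − Op^{AW,s₂}_N(f)‖ ≤ C/N holds on ℂ^N. -/

import Mathlib

open MeasureTheory
open scoped ENNReal

/-- Planck's constant `ℏ = (2πN)⁻¹`. -/
noncomputable def hbar (N : ℕ) : ℝ := 1 / (2 * Real.pi * N)

/-- The plane Gaussian coherent state `Ψ_{x,s}` at `x = (q₀,p₀)` with squeezing `s`. -/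
noncomputable def planeCS (N : ℕ) (x : ℝ × ℝ) (s : ℝ) (q : ℝ) : ℂ :=
  (((s / (Real.pi * hbar N)) ^ ((1 : ℝ) / 4) : ℝ) : ℂ) *
    Complex.exp (-(Complex.I * x.2 * x.1) / (2 * hbar N)) *
    Complex.exp (Complex.I * x.2 * q / hbar N) *
    Complex.exp (-((s : ℂ) * (q - x.1) ^ 2) / (2 * hbar N))

/-- The torus coherent state `ψ_{x,s} ∈ ℂ^N`, with components
`⟨q_j, ψ_{x,s}⟩ = N^{-1/2} Σ_{ν ∈ ℤ} Ψ_{x,s}(j/N + ν)`. -/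
noncomputable def torusCS (N : ℕ) (x : ℝ × ℝ) (s : ℝ) : EuclideanSpace ℂ (Fin N) :=
  (WithLp.equiv 2 (Fin N → ℂ)).symm fun j =>
    (((N : ℝ) ^ (-(1 / 2) : ℝ) : ℝ) : ℂ) *
      ∑' ν : ℤ, planeCS N x s (((j : ℕ) : ℝ) / N + ν)

/-- The rank-one operator `|ψ⟩⟨ψ| : u ↦ ⟨ψ,u⟩ψ`. -/
noncomputable def rankOne {E : Type*} [NormedAddCommGroup E] [InnerProductSpace ℂ E]
    (ψ : E) : E →L[ℂ] E :=
  (innerSL ℂ ψ).smulRight ψ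

/-- The anti-Wick quantization with (position-dependent) squeezing `s`:
`Op^{AW,s}_N(f) = N ∫_{[0,1)²} f(x) |ψ_{x,s(x)}⟩⟨ψ_{x,s(x)}| dx`. -/
noncomputable def opAW (N : ℕ) (s : ℝ × ℝ → ℝ) (f : ℝ × ℝ → ℂ) :
    EuclideanSpace ℂ (Fin N) →L[ℂ] EuclideanSpace ℂ (Fin N) :=
  (N : ℂ) • ∫ x in Set.Ico (0 : ℝ) 1 ×ˢ Set.Ico (0 : ℝ) 1,
    f x • rankOne (torusCS N x (s x))

/-!
Every anti-Wick quantization is `O(1/N)`-close to the torus Weyl quantization, which does not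
involve the squeezing; the triangle inequality then compares any two of them.

A matrix element of `Op^{AW,s}_N(f)` is a sum, over lifts of two positions to the line, of Gaussian
averages of the momentum Fourier coefficients of `e^{-τs} √s f` at positions near the midpoint,
where the damping `τ` contains `πm²/(2N)` for the frequency `m`. The Gaussian has width `N^{-1/2}`
and is even, so moving the position to the midpoint costs only a second difference, of size `1/N`.
Removing the remaining damping costs `O(m²/N)`, which the rapid decay of the Fourier coefficients
absorbs. The resulting entrywise errors `(C/N) (1 + m²)⁻¹` are summed by Schur's test.
-/

namespace AntiWick

open Function Set

section SmoothPeriodic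

variable {E F : Type*} [NormedAddCommGroup E] [NormedSpace ℝ E]
  [NormedAddCommGroup F] [NormedSpace ℝ F]

/-- Smooth functions on the torus `ℝ²/ℤ²`, encoded as smooth functions on the plane that are
`1`-periodic in each coordinate. -/
structure SmoothPeriodic (g : ℝ × ℝ → E) : Prop where
  contDiff : ContDiff ℝ (⊤ : ℕ∞) g
  periodic_fst : Periodic g (1, 0)
  periodic_snd : Periodic g (0, 1)

/-- The derivative of `g` in the constant direction `v`. -/
noncomputable def dirDeriv (v : ℝ × ℝ) (g : ℝ × ℝ → E) (x : ℝ × ℝ) : E := fderiv ℝ g x v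

namespace SmoothPeriodic

variable {g h : ℝ × ℝ → E}

lemma of_coordinates (hg : ContDiff ℝ (⊤ : ℕ∞) g)
    (hper : ∀ x : ℝ × ℝ, g (x.1 + 1, x.2) = g x ∧ g (x.1, x.2 + 1) = g x) :
    SmoothPeriodic g :=
  ⟨hg, fun x => by simpa [Prod.add_def] using (hper x).1,
    fun x => by simpa [Prod.add_def] using (hper x).2⟩

lemma continuous (hg : SmoothPeriodic g) : Continuous g := hg.contDiff.continuous

lemma differentiable (hg : SmoothPeriodic g) : Differentiable ℝ g :=
  hg.contDiff.differentiable (by simp)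

lemma comp {φ : E → F} (hφ : ∀ x, ContDiffAt ℝ (⊤ : ℕ∞) φ (g x)) (hg : SmoothPeriodic g) :
    SmoothPeriodic (fun x => φ (g x)) :=
  ⟨contDiff_iff_contDiffAt.2 fun x => (hφ x).comp x hg.contDiff.contDiffAt,
    hg.periodic_fst.comp φ, hg.periodic_snd.comp φ⟩

lemma prodMk {h : ℝ × ℝ → F} (hg : SmoothPeriodic g) (hh : SmoothPeriodic h) :
    SmoothPeriodic (fun x => (g x, h x)) :=
  ⟨hg.contDiff.prodMk hh.contDiff, fun x => by rw [hg.periodic_fst, hh.periodic_fst],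
    fun x => by rw [hg.periodic_snd, hh.periodic_snd]⟩

lemma add (hg : SmoothPeriodic g) (hh : SmoothPeriodic h) :
    SmoothPeriodic (fun x => g x + h x) :=
  (hg.prodMk hh).comp (φ := fun z => z.1 + z.2) fun _ => contDiff_add.contDiffAt

lemma smul {r : ℝ × ℝ → ℝ} (hr : SmoothPeriodic r) (hg : SmoothPeriodic g) :
    SmoothPeriodic (fun x => r x • g x) :=
  (hr.prodMk hg).comp (φ := fun z => z.1 • z.2) fun _ => contDiff_smul.contDiffAt

lemma dirDeriv (hg : SmoothPeriodic g) (v : ℝ × ℝ) : SmoothPeriodic (dirDeriv v g) := by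
  have periodic_fderiv {c : ℝ × ℝ} (hc : Periodic g c) : Periodic (AntiWick.dirDeriv v g) c :=
    fun x => by rw [AntiWick.dirDeriv, ← fderiv_comp_add_right, hc.funext, AntiWick.dirDeriv]
  exact ⟨(hg.contDiff.fderiv_right (m := (⊤ : ℕ∞)) (by simp)).clm_apply contDiff_const,
    periodic_fderiv hg.periodic_fst, periodic_fderiv hg.periodic_snd⟩

lemma exists_norm_le (hg : SmoothPeriodic g) : ∃ C : ℝ, 0 ≤ C ∧ ∀ x, ‖g x‖ ≤ C := by
  obtain ⟨C, hC⟩ := (isCompact_Icc (a := (0 : ℝ × ℝ)) (b := 1)).exists_bound_of_continuousOn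
    hg.continuous.continuousOn
  refine ⟨C, (norm_nonneg _).trans (hC 0 (by simp)), fun x => ?_⟩
  have fract_eq : g (Int.fract x.1, Int.fract x.2) = g x := by
    have lattice : x - (⌊x.1⌋ • (1, 0) + ⌊x.2⌋ • (0, 1)) = (Int.fract x.1, Int.fract x.2) := by
      simp [Prod.ext_iff]
    rw [← lattice, ← sub_sub, (hg.periodic_snd.zsmul _).sub_eq, (hg.periodic_fst.zsmul _).sub_eq]
  rw [← fract_eq]
  exact hC _ ⟨⟨Int.fract_nonneg _, Int.fract_nonneg _⟩,
    ⟨(Int.fract_lt_one _).le, (Int.fract_lt_one _).le⟩⟩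

lemma sqrt_smul {s : ℝ × ℝ → ℝ} (hs : SmoothPeriodic s) (hpos : ∀ x, 0 < s x)
    (hg : SmoothPeriodic g) : SmoothPeriodic (fun x => √(s x) • g x) :=
  (hs.comp fun x => Real.contDiffAt_sqrt (hpos x).ne').smul hg

lemma exists_pos_two_mul_le {s : ℝ × ℝ → ℝ} (hs : SmoothPeriodic s) (hpos : ∀ x, 0 < s x) :
    ∃ σ : ℝ, 0 < σ ∧ ∀ x, 2 * σ ≤ s x := by
  obtain ⟨C, -, hC⟩ := (hs.comp fun x => contDiffAt_inv ℝ (hpos x).ne').exists_norm_le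
  have inv_le (x : ℝ × ℝ) : (s x)⁻¹ ≤ C := (le_abs_self _).trans (hC x)
  have hC0 : 0 < C⁻¹ := inv_pos.2 ((inv_pos.2 (hpos 0)).trans_le (inv_le 0))
  refine ⟨C⁻¹ / 2, half_pos hC0, fun x => ?_⟩
  rw [mul_div_cancel₀ _ two_ne_zero]
  exact inv_le_of_inv_le₀ (hpos x) (inv_le x)

lemma hasDerivAt_fst (hg : SmoothPeriodic g) (q p : ℝ) :
    HasDerivAt (fun q => g (q, p)) (AntiWick.dirDeriv (1, 0) g (q, p)) q :=
  (hg.differentiable (q, p)).hasFDerivAt.comp_hasDerivAt q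
    ((hasDerivAt_id q).prodMk (hasDerivAt_const q p))

lemma hasDerivAt_snd (hg : SmoothPeriodic g) (q p : ℝ) :
    HasDerivAt (fun p => g (q, p)) (AntiWick.dirDeriv (0, 1) g (q, p)) p :=
  (hg.differentiable (q, p)).hasFDerivAt.comp_hasDerivAt p
    ((hasDerivAt_const p q).prodMk (hasDerivAt_id p))

end SmoothPeriodic

end SmoothPeriodic

section FourierCoefficients

lemma continuous_fourier_coe {T : ℝ} (m : ℤ) :
    Continuous fun t : ℝ => fourier m (t : AddCircle T) :=
  (map_continuous (fourier m)).comp (AddCircle.continuous_mk' T)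

lemma norm_fourier_smul {E : Type*} [NormedAddCommGroup E] [NormedSpace ℂ E] {T : ℝ}
    (m : ℤ) (t : AddCircle T) (v : E) : ‖fourier m t • v‖ = ‖v‖ := by
  rw [norm_smul, fourier_apply, Circle.norm_coe, one_mul]

lemma norm_fourierCoeffOn_le {E : Type*} [NormedAddCommGroup E] [NormedSpace ℂ E] {a b : ℝ}
    (hab : a < b) {f : ℝ → E} {C : ℝ} (hC : ∀ x ∈ Ioc a b, ‖f x‖ ≤ C) (m : ℤ) :
    ‖fourierCoeffOn hab f m‖ ≤ C := by
  have hba : 0 < b - a := sub_pos.2 hab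
  rw [fourierCoeffOn_eq_integral, norm_smul, Real.norm_of_nonneg (by positivity)]
  have norm_integral_le := intervalIntegral.norm_integral_le_of_norm_le_const (a := a) (b := b)
    (f := fun x => fourier (-m) (x : AddCircle (b - a)) • f x) (C := C) fun x hx => by
      rw [norm_fourier_smul]
      exact hC x (by rwa [uIoc_of_le hab.le] at hx)
  rw [abs_of_pos hba] at norm_integral_le
  calc 1 / (b - a) * _ ≤ 1 / (b - a) * (C * (b - a)) := by gcongr
    _ = C := by field_simp

lemma continuous_fourierCoeffOn {X E : Type*} [TopologicalSpace X] [FirstCountableTopology X]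
    [NormedAddCommGroup E] [NormedSpace ℂ E] {a b : ℝ} (hab : a < b) {F : X → ℝ → E}
    (hF : Continuous ↿F) (m : ℤ) : Continuous fun x => fourierCoeffOn hab (F x) m := by
  simp only [fourierCoeffOn_eq_integral]
  refine (intervalIntegral.continuous_parametric_intervalIntegral_of_continuous' ?_
    a b).const_smul _
  exact ((continuous_fourier_coe (-m)).comp continuous_snd).smul hF

lemma hasDerivAt_fourierCoeffOn {E : Type*} [NormedAddCommGroup E] [NormedSpace ℂ E] {a b : ℝ}
    (hab : a < b) {F F' : ℝ → ℝ → E} (hF : Continuous ↿F) (hF' : Continuous ↿F')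
    (hderiv : ∀ x t, HasDerivAt (F · t) (F' x t) x) (m : ℤ) (x : ℝ) :
    HasDerivAt (fun x => fourierCoeffOn hab (F x) m) (fourierCoeffOn hab (F' x) m) x := by
  obtain ⟨C, hC⟩ := ((isCompact_Icc (a := x - 1) (b := x + 1)).prod
    (isCompact_Icc (a := a) (b := b))).exists_bound_of_continuousOn hF'.continuousOn
  have continuous_integrand {G : ℝ → ℝ → E} (hG : Continuous ↿G) (y : ℝ) :
      Continuous fun t : ℝ => fourier (-m) (t : AddCircle (b - a)) • G y t :=
    (continuous_fourier_coe (-m)).smul (hG.comp (Continuous.prodMk_right y))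
  simp only [fourierCoeffOn_eq_integral]
  refine HasDerivAt.const_smul (1 / (b - a))
    (intervalIntegral.hasDerivAt_integral_of_dominated_loc_of_deriv_le
      (F := fun x t => fourier (-m) (t : AddCircle (b - a)) • F x t)
      (F' := fun x t => fourier (-m) (t : AddCircle (b - a)) • F' x t)
      (s := Icc (x - 1) (x + 1)) (bound := fun _ => C)
      (Icc_mem_nhds (by linarith) (by linarith))
      (.of_forall fun y => (continuous_integrand hF y).aestronglyMeasurable)
      ((continuous_integrand hF x).intervalIntegrable _ _)
      (continuous_integrand hF' x).aestronglyMeasurable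
      (.of_forall fun t ht y hy => ?_) (by simp)
      (.of_forall fun t _ y _ => (hderiv y t).const_smul _)).2
  rw [norm_fourier_smul]
  rw [uIoc_of_le hab.le] at ht
  exact hC (y, t) ⟨hy, Ioc_subset_Icc_self ht⟩

lemma integral_fourierCoeffOn {α E : Type*} [MeasurableSpace α] {μ : Measure α} [SFinite μ]
    [NormedAddCommGroup E] [NormedSpace ℂ E] {a b : ℝ} (hab : a < b) {F : α → ℝ → E}
    (hF : Integrable (uncurry F) (μ.prod (volume.restrict (Ioc a b)))) (m : ℤ) :
    ∫ x, fourierCoeffOn hab (F x) m ∂μ = fourierCoeffOn hab (fun t => ∫ x, F x t ∂μ) m := by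
  have integrable_mode_smul : Integrable
      (uncurry fun (x : α) (t : ℝ) => fourier (-m) (t : AddCircle (b - a)) • F x t)
      (μ.prod (volume.restrict (Ioc a b))) :=
    hF.mono (((continuous_fourier_coe (-m)).measurable.comp
        measurable_snd).aestronglyMeasurable.smul hF.aestronglyMeasurable)
      (.of_forall fun _ => (norm_fourier_smul _ _ _).le)
  simp only [fourierCoeffOn_eq_integral, intervalIntegral.integral_of_le hab.le]
  rw [integral_smul, integral_integral_swap integrable_mode_smul]
  simp only [integral_smul]

/-- The `m`-th Fourier coefficient `∫₀¹ g(q, p) e^{-2πimp} dp` of `g` in the momentum variable. -/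
noncomputable def momentumCoeff (g : ℝ × ℝ → ℂ) (q : ℝ) (m : ℤ) : ℂ :=
  fourierCoeffOn (zero_lt_one' ℝ) (fun p => g (q, p)) m

lemma momentumCoeff_eq_integral (g : ℝ × ℝ → ℂ) (q : ℝ) (m : ℤ) :
    momentumCoeff g q m =
      ∫ p in (0 : ℝ)..1, Complex.exp (-(2 * Real.pi * Complex.I * m * p)) * g (q, p) := by
  simp only [momentumCoeff, fourierCoeffOn_eq_integral, fourier_coe_apply, smul_eq_mul]
  simp [neg_mul]

lemma norm_momentumCoeff_le {g : ℝ × ℝ → ℂ} {q C : ℝ} (hC : ∀ p, ‖g (q, p)‖ ≤ C) (m : ℤ) :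
    ‖momentumCoeff g q m‖ ≤ C :=
  norm_fourierCoeffOn_le _ (fun p _ => hC p) m

namespace SmoothPeriodic

variable {g : ℝ × ℝ → ℂ}

lemma periodic_momentumCoeff (hg : SmoothPeriodic g) (m : ℤ) :
    Periodic (fun q => momentumCoeff g q m) 1 := fun q => by
  have shift (p : ℝ) : g (q + 1, p) = g (q, p) := by simpa using hg.periodic_fst (q, p)
  simp only [momentumCoeff, shift]

lemma hasDerivAt_momentumCoeff (hg : SmoothPeriodic g) (m : ℤ) (q : ℝ) :
    HasDerivAt (fun q => momentumCoeff g q m)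
      (momentumCoeff (AntiWick.dirDeriv (1, 0) g) q m) q :=
  hasDerivAt_fourierCoeffOn _ hg.continuous (hg.dirDeriv (1, 0)).continuous hg.hasDerivAt_fst m q

lemma momentumCoeff_dirDeriv_snd (hg : SmoothPeriodic g) (q : ℝ) (m : ℤ) :
    momentumCoeff (AntiWick.dirDeriv (0, 1) g) q m =
      2 * Real.pi * Complex.I * m * momentumCoeff g q m := by
  have endpoints : g (q, 1) = g (q, 0) := by simpa using hg.periodic_snd (q, 0)
  have continuous_deriv : Continuous fun p => AntiWick.dirDeriv (0, 1) g (q, p) :=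
    (hg.dirDeriv (0, 1)).continuous.comp (Continuous.prodMk_right q)
  rcases eq_or_ne m 0 with rfl | hm
  · rw [momentumCoeff_eq_integral]
    simpa [endpoints] using intervalIntegral.integral_eq_sub_of_hasDerivAt
      (fun p _ => hg.hasDerivAt_snd q p) (continuous_deriv.intervalIntegrable 0 1)
  · have by_parts := fourierCoeffOn_of_hasDerivAt (zero_lt_one' ℝ) hm
      (fun p _ => hg.hasDerivAt_snd q p) (continuous_deriv.intervalIntegrable 0 1)
    have hm' : (m : ℂ) ≠ 0 := Int.cast_ne_zero.2 hm
    rw [endpoints] at by_parts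
    simp only [momentumCoeff]
    rw [by_parts]
    field_simp
    simp

end SmoothPeriodic

end FourierCoefficients

section DampedAmplitudes

/-- The amplitude `e^{-τs} g`. Products of two coherent states with squeezing `s` carry such a
damping factor. -/
noncomputable def damped (s : ℝ × ℝ → ℝ) (g : ℝ × ℝ → ℂ) (τ : ℝ) (x : ℝ × ℝ) : ℂ :=
  Real.exp (-(τ * s x)) • g x

/-- Finite sums of the amplitudes `τ ^ k • e^{-τs} g` with `g` smooth and periodic. Unlike the
amplitudes `e^{-τs} g` themselves, these are stable under differentiation in phase space. -/
inductive IsDampedAmplitude (s : ℝ × ℝ → ℝ) : (ℝ → ℝ × ℝ → ℂ) → Prop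
  | monomial (k : ℕ) {g : ℝ × ℝ → ℂ} (hg : SmoothPeriodic g) :
      IsDampedAmplitude s fun τ x => τ ^ k • damped s g τ x
  | add {a b : ℝ → ℝ × ℝ → ℂ} (ha : IsDampedAmplitude s a) (hb : IsDampedAmplitude s b) :
      IsDampedAmplitude s fun τ x => a τ x + b τ x

variable {s : ℝ × ℝ → ℝ} {g : ℝ × ℝ → ℂ} {a : ℝ → ℝ × ℝ → ℂ}

lemma damped_zero : damped s g 0 = g := by
  ext x
  simp [damped]

lemma norm_damped (τ : ℝ) (x : ℝ × ℝ) :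
    ‖damped s g τ x‖ = Real.exp (-(τ * s x)) * ‖g x‖ := by
  rw [damped, norm_smul, Real.norm_of_nonneg (Real.exp_pos _).le]

lemma continuous_damped (hs : Continuous s) (hg : Continuous g) : Continuous ↿(damped s g) :=
  (Real.continuous_exp.comp (continuous_fst.mul (hs.comp continuous_snd)).neg).smul
    (hg.comp continuous_snd)

lemma hasDerivAt_damped (τ : ℝ) (x : ℝ × ℝ) :
    HasDerivAt (damped s g · x) (damped s (fun x => -s x • g x) τ x) τ := by
  have exponent : HasDerivAt (fun τ => -(τ * s x)) (-s x) τ := by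
    simpa only [id, one_mul] using ((hasDerivAt_id τ).mul_const (s x)).fun_neg
  simpa only [damped, smul_smul] using exponent.exp.smul_const (g x)

lemma isDampedAmplitude_damped (hg : SmoothPeriodic g) : IsDampedAmplitude s (damped s g) := by
  simpa using IsDampedAmplitude.monomial (s := s) 0 hg

lemma SmoothPeriodic.damped (hs : SmoothPeriodic s) (hg : SmoothPeriodic g) (τ : ℝ) :
    SmoothPeriodic (damped s g τ) :=
  (hs.comp (φ := fun y => Real.exp (-(τ * y))) fun _ =>
    (contDiff_const.mul contDiff_id).neg.exp.contDiffAt).smul hg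

lemma dirDeriv_damped (hs : SmoothPeriodic s) (hg : SmoothPeriodic g) (v : ℝ × ℝ) (τ : ℝ)
    (x : ℝ × ℝ) : dirDeriv v (damped s g τ) x =
      damped s (dirDeriv v g) τ x + τ • damped s (fun x => -dirDeriv v s x • g x) τ x := by
  have weight : HasFDerivAt (fun x => Real.exp (-(τ * s x)))
      (Real.exp (-(τ * s x)) • -(τ • fderiv ℝ s x)) x :=
    (((hs.differentiable x).hasFDerivAt.const_mul τ).neg).exp
  have product := (weight.fun_smul (hg.differentiable x).hasFDerivAt).fderiv
  rw [dirDeriv, show damped s g τ = fun x => Real.exp (-(τ * s x)) • g x from rfl, product]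
  simp only [damped, dirDeriv, add_apply, smul_apply,
    ContinuousLinearMap.smulRight_apply, neg_apply, smul_eq_mul, smul_smul]
  congr 2
  ring

lemma pow_mul_exp_neg_le {σ τ : ℝ} (hσ : 0 < σ) (hτ : 0 ≤ τ) (k : ℕ) :
    τ ^ k * Real.exp (-(τ * (2 * σ))) ≤ k.factorial / σ ^ k * Real.exp (-(σ * τ)) := by
  have power_le : τ ^ k ≤ k.factorial / σ ^ k * Real.exp (σ * τ) := by
    have taylor := Real.pow_div_factorial_le_exp (σ * τ) (by positivity) k
    rw [div_le_iff₀ (by positivity), mul_pow] at taylor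
    rw [div_mul_eq_mul_div, le_div_iff₀ (by positivity)]
    linarith
  calc τ ^ k * Real.exp (-(τ * (2 * σ)))
      ≤ k.factorial / σ ^ k * Real.exp (σ * τ) * Real.exp (-(τ * (2 * σ))) := by gcongr
    _ = _ := by
      rw [mul_assoc, ← Real.exp_add]
      ring_nf

lemma norm_add_sub_two_smul_le {E : Type*} [NormedAddCommGroup E] [NormedSpace ℝ E]
    {h h' h'' : ℝ → E} (hh : ∀ x, HasDerivAt h (h' x) x) (hh' : ∀ x, HasDerivAt h' (h'' x) x)
    {M : ℝ} (hM : ∀ x, ‖h'' x‖ ≤ M) (c u : ℝ) :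
    ‖h (c + u) + h (c - u) - (2 : ℝ) • h c‖ ≤ 2 * M * u ^ 2 := by
  have hM0 : 0 ≤ M := (norm_nonneg _).trans (hM 0)
  have even_deriv (v : ℝ) :
      HasDerivAt (fun v => h (c + v) + h (c - v)) (h' (c + v) - h' (c - v)) v :=
    (((hh (c + v)).comp_const_add c v).add ((hh (c - v)).comp_const_sub c v)).congr_deriv
      (sub_eq_add_neg _ _).symm
  have even_deriv_le (v : ℝ) (hv : v ∈ uIcc 0 u) :
      ‖h' (c + v) - h' (c - v)‖ ≤ 2 * M * |u| := by
    have hvu : |v| ≤ |u| := by simpa using abs_sub_left_of_mem_uIcc hv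
    calc ‖h' (c + v) - h' (c - v)‖ ≤ M * ‖c + v - (c - v)‖ :=
          convex_univ.norm_image_sub_le_of_norm_hasDerivWithin_le
            (fun x _ => (hh' x).hasDerivWithinAt) (fun x _ => hM x) (mem_univ _) (mem_univ _)
      _ = 2 * M * |v| := by
          rw [add_sub_sub_cancel, ← two_mul, norm_mul, Real.norm_ofNat, Real.norm_eq_abs]
          ring
      _ ≤ 2 * M * |u| := by gcongr
  have mean_value := (convex_uIcc 0 u).norm_image_sub_le_of_norm_hasDerivWithin_le
    (fun v _ => (even_deriv v).hasDerivWithinAt) even_deriv_le left_mem_uIcc right_mem_uIcc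
  simpa [two_smul, mul_assoc, ← pow_two] using mean_value

namespace IsDampedAmplitude

lemma smoothPeriodic (hs : SmoothPeriodic s) (ha : IsDampedAmplitude s a) (τ : ℝ) :
    SmoothPeriodic (a τ) := by
  induction ha with
  | monomial k hg => exact (hs.damped hg τ).comp fun _ => contDiffAt_id.const_smul (τ ^ k)
  | add _ _ iha ihb => exact iha.add ihb

lemma dirDeriv (hs : SmoothPeriodic s) (ha : IsDampedAmplitude s a) (v : ℝ × ℝ) :
    IsDampedAmplitude s fun τ => dirDeriv v (a τ) := by
  induction ha with
  | @monomial k g hg =>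
    convert (monomial k (hg.dirDeriv v)).add
      (monomial (k + 1) ((hs.dirDeriv v).comp (fun _ => contDiffAt_id.neg) |>.smul hg))
      using 3 with τ x
    rw [AntiWick.dirDeriv, fderiv_fun_const_smul ((hs.damped hg τ).differentiable x),
      smul_apply, ← AntiWick.dirDeriv, dirDeriv_damped hs hg, smul_add,
      smul_smul, ← pow_succ]
    rfl
  | add ha hb iha ihb =>
    convert iha.add ihb using 3 with τ x
    simp only [AntiWick.dirDeriv]
    rw [fderiv_fun_add ((ha.smoothPeriodic hs τ).differentiable x)
      ((hb.smoothPeriodic hs τ).differentiable x), add_apply]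

variable {σ : ℝ}

lemma exists_norm_le (hσ : 0 < σ) (hσs : ∀ x, 2 * σ ≤ s x) (ha : IsDampedAmplitude s a) :
    ∃ C : ℝ, 0 ≤ C ∧ ∀ τ x, 0 ≤ τ → ‖a τ x‖ ≤ C * Real.exp (-(σ * τ)) := by
  induction ha with
  | @monomial k g hg =>
    obtain ⟨C, hC0, hC⟩ := hg.exists_norm_le
    refine ⟨k.factorial / σ ^ k * C, by positivity, fun τ x hτ => ?_⟩
    rw [norm_smul, norm_damped, Real.norm_of_nonneg (by positivity), ← mul_assoc]
    calc τ ^ k * Real.exp (-(τ * s x)) * ‖g x‖ ≤ τ ^ k * Real.exp (-(τ * (2 * σ))) * C := by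
          gcongr
          exacts [hσs x, hC x]
      _ ≤ k.factorial / σ ^ k * Real.exp (-(σ * τ)) * C :=
          mul_le_mul_of_nonneg_right (pow_mul_exp_neg_le hσ hτ k) hC0
      _ = _ := by ring
  | add _ _ iha ihb =>
    obtain ⟨A, hA0, hA⟩ := iha
    obtain ⟨B, hB0, hB⟩ := ihb
    refine ⟨A + B, by positivity, fun τ x hτ => (norm_add_le _ _).trans ?_⟩
    rw [add_mul]
    exact add_le_add (hA τ x hτ) (hB τ x hτ)

lemma exists_pow_mul_norm_momentumCoeff_le (hs : SmoothPeriodic s) (hσ : 0 < σ)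
    (hσs : ∀ x, 2 * σ ≤ s x) (n : ℕ) (ha : IsDampedAmplitude s a) :
    ∃ C : ℝ, 0 ≤ C ∧ ∀ τ q (m : ℤ), 0 ≤ τ →
      |(m : ℝ)| ^ n * ‖momentumCoeff (a τ) q m‖ ≤ C * Real.exp (-(σ * τ)) := by
  induction n generalizing a with
  | zero =>
    obtain ⟨C, hC0, hC⟩ := ha.exists_norm_le hσ hσs
    refine ⟨C, hC0, fun τ q m hτ => ?_⟩
    simpa using norm_momentumCoeff_le (fun p => hC τ (q, p) hτ) m
  | succ n ih =>
    obtain ⟨C, hC0, hC⟩ := ih (ha.dirDeriv hs (0, 1))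
    refine ⟨C, hC0, fun τ q m hτ => ?_⟩
    have norm_frequency : ‖(2 * Real.pi * Complex.I * m : ℂ)‖ = 2 * Real.pi * |(m : ℝ)| := by
      simp [Real.pi_pos.le]
    calc |(m : ℝ)| ^ (n + 1) * ‖momentumCoeff (a τ) q m‖
        = |(m : ℝ)| ^ n * (1 * |(m : ℝ)| * ‖momentumCoeff (a τ) q m‖) := by ring
      _ ≤ |(m : ℝ)| ^ n * (2 * Real.pi * |(m : ℝ)| * ‖momentumCoeff (a τ) q m‖) := by
          gcongr
          linarith [Real.pi_gt_three]
      _ = |(m : ℝ)| ^ n * ‖momentumCoeff (AntiWick.dirDeriv (0, 1) (a τ)) q m‖ := by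
          rw [(ha.smoothPeriodic hs τ).momentumCoeff_dirDeriv_snd, norm_mul, norm_frequency]
      _ ≤ C * Real.exp (-(σ * τ)) := hC τ q m hτ

lemma exists_sq_pow_mul_norm_momentumCoeff_le (hs : SmoothPeriodic s) (hσ : 0 < σ)
    (hσs : ∀ x, 2 * σ ≤ s x) (j : ℕ) (ha : IsDampedAmplitude s a) :
    ∃ C : ℝ, 0 ≤ C ∧ ∀ τ q (m : ℤ), 0 ≤ τ →
      ((m : ℝ) ^ 2) ^ j * (1 + (m : ℝ) ^ 2) * ‖momentumCoeff (a τ) q m‖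
        ≤ C * Real.exp (-(σ * τ)) := by
  obtain ⟨A, hA0, hA⟩ := ha.exists_pow_mul_norm_momentumCoeff_le hs hσ hσs (2 * j)
  obtain ⟨B, hB0, hB⟩ := ha.exists_pow_mul_norm_momentumCoeff_le hs hσ hσs (2 * (j + 1))
  refine ⟨A + B, by positivity, fun τ q m hτ => ?_⟩
  have low := hA τ q m hτ
  have high := hB τ q m hτ
  rw [pow_mul, sq_abs] at low high
  rw [pow_succ] at high
  linarith

lemma exists_second_difference_le (hs : SmoothPeriodic s) (hσ : 0 < σ)
    (hσs : ∀ x, 2 * σ ≤ s x) (ha : IsDampedAmplitude s a) :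
    ∃ C : ℝ, 0 ≤ C ∧ ∀ τ c u (m : ℤ), 0 ≤ τ →
      (1 + (m : ℝ) ^ 2) * ‖momentumCoeff (a τ) (c + u) m + momentumCoeff (a τ) (c - u) m
          - (2 : ℝ) • momentumCoeff (a τ) c m‖ ≤ C * u ^ 2 * Real.exp (-(σ * τ)) := by
  have ha' := ha.dirDeriv hs (1, 0)
  obtain ⟨C, hC0, hC⟩ :=
    (ha'.dirDeriv hs (1, 0)).exists_sq_pow_mul_norm_momentumCoeff_le hs hσ hσs 0
  refine ⟨2 * C, by positivity, fun τ c u m hτ => ?_⟩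
  have hm : 0 < 1 + (m : ℝ) ^ 2 := by positivity
  have second_difference := norm_add_sub_two_smul_le
    ((ha.smoothPeriodic hs τ).hasDerivAt_momentumCoeff m)
    ((ha'.smoothPeriodic hs τ).hasDerivAt_momentumCoeff m)
    (M := C * Real.exp (-(σ * τ)) / (1 + (m : ℝ) ^ 2))
    (fun q => by rw [le_div_iff₀' hm]; simpa using hC τ q m hτ) c u
  calc _ ≤ (1 + (m : ℝ) ^ 2) *
        (2 * (C * Real.exp (-(σ * τ)) / (1 + (m : ℝ) ^ 2)) * u ^ 2) := by gcongr
    _ = _ := by field_simp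

end IsDampedAmplitude

lemma exists_norm_momentumCoeff_damped_sub_le (hs : SmoothPeriodic s) {σ : ℝ} (hσ : 0 < σ)
    (hσs : ∀ x, 2 * σ ≤ s x) (hg : SmoothPeriodic g) :
    ∃ C : ℝ, 0 ≤ C ∧ ∀ τ c (m : ℤ), 0 ≤ τ →
      (m : ℝ) ^ 2 * (1 + (m : ℝ) ^ 2) *
        ‖momentumCoeff (damped s g τ) c m - momentumCoeff g c m‖ ≤ C * τ := by
  have hg' : SmoothPeriodic fun x => -s x • g x :=
    (hs.comp fun _ => contDiffAt_id.neg).smul hg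
  obtain ⟨C, hC0, hC⟩ :=
    (isDampedAmplitude_damped hg').exists_sq_pow_mul_norm_momentumCoeff_le hs hσ hσs 1
  have slice {h : ℝ × ℝ → ℂ} (hh : SmoothPeriodic h) (c : ℝ) :
      Continuous ↿fun τ p => damped s h τ (c, p) :=
    (continuous_damped hs.continuous hh.continuous).comp
      (continuous_fst.prodMk (continuous_const.prodMk continuous_snd))
  refine ⟨C, hC0, fun τ c m hτ => ?_⟩
  rcases eq_or_ne m 0 with rfl | hm
  · simpa using mul_nonneg hC0 hτ
  have hm_pos : 0 < (m : ℝ) ^ 2 * (1 + (m : ℝ) ^ 2) := by positivity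
  have deriv_le (t : ℝ) (ht : t ∈ Ici (0 : ℝ)) :
      ‖momentumCoeff (damped s (fun x => -s x • g x) t) c m‖
        ≤ C / ((m : ℝ) ^ 2 * (1 + (m : ℝ) ^ 2)) := by
    rw [le_div_iff₀' hm_pos]
    have decay := hC t c m ht
    rw [pow_one] at decay
    exact decay.trans (mul_le_of_le_one_right hC0
      (Real.exp_le_one_iff.2 (neg_nonpos.2 (mul_nonneg hσ.le ht))))
  have mean_value := (convex_Ici (0 : ℝ)).norm_image_sub_le_of_norm_hasDerivWithin_le
    (fun t _ => (hasDerivAt_fourierCoeffOn (zero_lt_one' ℝ) (slice hg c) (slice hg' c)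
      (fun t p => hasDerivAt_damped t (c, p)) m t).hasDerivWithinAt)
    deriv_le self_mem_Ici (mem_Ici.2 hτ)
  rw [sub_zero, Real.norm_of_nonneg hτ, div_mul_eq_mul_div, le_div_iff₀' hm_pos] at mean_value
  simpa only [momentumCoeff, damped_zero] using mean_value

end DampedAmplitudes

section GaussianAveraging

/-- The damping parameter `2πN u² + πm²/(2N)` of the `m`-th momentum coefficient at distance `u`
from the midpoint of two positions. -/
noncomputable def damping (N : ℝ) (m : ℤ) (u : ℝ) : ℝ :=
  2 * Real.pi * N * u ^ 2 + Real.pi * m ^ 2 / (2 * N)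

/-- The Gaussian average of momentum coefficients over positions near `c` whose periodization gives
the matrix elements of the anti-Wick quantization of `f` with squeezing `s`. -/
noncomputable def antiWickKernel (s : ℝ × ℝ → ℝ) (f : ℝ × ℝ → ℂ) (N c : ℝ) (m : ℤ) : ℂ :=
  ∫ u : ℝ, √(2 * N) •
    momentumCoeff (damped s (fun x => √(s x) • f x) (damping N m u)) (c + u) m

variable {s : ℝ × ℝ → ℝ} {f g : ℝ × ℝ → ℂ} {N σ : ℝ}

lemma damping_neg (N : ℝ) (m : ℤ) (u : ℝ) : damping N m (-u) = damping N m u := by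
  simp [damping]

lemma continuous_damping (N : ℝ) (m : ℤ) : Continuous (damping N m) := by
  unfold damping
  fun_prop

lemma le_damping (hN : 0 < N) (m : ℤ) (u : ℝ) : 2 * Real.pi * N * u ^ 2 ≤ damping N m u :=
  le_add_of_nonneg_right (by positivity)

lemma damping_nonneg (hN : 0 < N) (m : ℤ) (u : ℝ) : 0 ≤ damping N m u :=
  le_trans (by positivity) (le_damping hN m u)

lemma exp_neg_mul_damping_le (hN : 0 < N) (hσ : 0 ≤ σ) (m : ℤ) (u : ℝ) :
    Real.exp (-(σ * damping N m u)) ≤ Real.exp (-(2 * Real.pi * N * σ) * u ^ 2) := by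
  have := mul_le_mul_of_nonneg_left (le_damping hN m u) hσ
  rw [Real.exp_le_exp]
  linarith

lemma sq_mul_exp_neg_mul_damping_le (hN : 0 < N) (hσ : 0 < σ) (m : ℤ) (u : ℝ) :
    u ^ 2 * Real.exp (-(σ * damping N m u)) ≤
      (Real.pi * N * σ)⁻¹ * Real.exp (-(Real.pi * N * σ) * u ^ 2) :=
  calc u ^ 2 * Real.exp (-(σ * damping N m u))
      ≤ (u ^ 2) ^ 1 * Real.exp (-(u ^ 2 * (2 * (Real.pi * N * σ)))) := by
        rw [pow_one]
        refine mul_le_mul_of_nonneg_left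
          ((exp_neg_mul_damping_le hN hσ.le m u).trans_eq ?_) (sq_nonneg u)
        ring_nf
    _ ≤ (Real.pi * N * σ)⁻¹ * Real.exp (-(Real.pi * N * σ) * u ^ 2) := by
        simpa using pow_mul_exp_neg_le (by positivity : 0 < Real.pi * N * σ) (sq_nonneg u) 1

lemma damped_damping (m : ℤ) (u : ℝ) (x : ℝ × ℝ) :
    damped s g (damping N m u) x =
      Real.exp (-(2 * Real.pi * N * s x) * u ^ 2) • damped s g (Real.pi * m ^ 2 / (2 * N)) x := by
  rw [damped, damped, smul_smul, ← Real.exp_add, damping]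
  ring_nf

lemma integral_damped_damping (hN : 0 < N) (m : ℤ) {x : ℝ × ℝ} (hx : 0 < s x) :
    ∫ u : ℝ, √(2 * N) • damped s (fun x => √(s x) • f x) (damping N m u) x =
      damped s f (Real.pi * m ^ 2 / (2 * N)) x := by
  have normalization : √(2 * N) * √(Real.pi / (2 * Real.pi * N * s x)) * √(s x) = 1 := by
    rw [← Real.sqrt_mul (by positivity), ← Real.sqrt_mul (by positivity), Real.sqrt_eq_one]
    field_simp
  simp only [damped_damping]
  rw [integral_smul, integral_smul_const, integral_gaussian, smul_smul]
  simp only [damped]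
  rw [smul_comm (Real.exp _), smul_smul, normalization, one_smul]

lemma integrable_damped_damping (hs : SmoothPeriodic s) (hσ : 0 < σ) (hσs : ∀ x, 2 * σ ≤ s x)
    (hg : SmoothPeriodic g) (hN : 0 < N) (c : ℝ) (m : ℤ) :
    Integrable (uncurry fun u p => damped s g (damping N m u) (c, p))
      (volume.prod (volume.restrict (Ioc (0 : ℝ) 1))) := by
  obtain ⟨C, hC0, hC⟩ := (isDampedAmplitude_damped hg).exists_norm_le hσ hσs
  have gaussian : Integrable fun u : ℝ => C * Real.exp (-(2 * Real.pi * N * σ) * u ^ 2) :=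
    (integrable_exp_neg_mul_sq (by positivity)).const_mul C
  have one : Integrable (fun _ : ℝ => (1 : ℝ)) (volume.restrict (Ioc (0 : ℝ) 1)) := by simp
  have continuous_integrand : Continuous (uncurry fun u p => damped s g (damping N m u) (c, p)) :=
    (continuous_damped hs.continuous hg.continuous).comp
      (((continuous_damping N m).comp continuous_fst).prodMk
        (continuous_const.prodMk continuous_snd))
  refine (gaussian.mul_prod one).mono' continuous_integrand.aestronglyMeasurable
    (.of_forall fun z => ?_)
  rw [mul_one]
  exact (hC _ _ (damping_nonneg hN m z.1)).trans
    (mul_le_mul_of_nonneg_left (exp_neg_mul_damping_le hN hσ.le m z.1) hC0)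

lemma integral_momentumCoeff_damping (hs : SmoothPeriodic s) (hσ : 0 < σ)
    (hσs : ∀ x, 2 * σ ≤ s x) (hg : SmoothPeriodic fun x => √(s x) • f x) (hN : 0 < N) (c : ℝ)
    (m : ℤ) :
    ∫ u : ℝ, √(2 * N) • momentumCoeff (damped s (fun x => √(s x) • f x) (damping N m u)) c m =
      momentumCoeff (damped s f (Real.pi * m ^ 2 / (2 * N))) c m := by
  have smul_coeff (u : ℝ) :
      √(2 * N) • momentumCoeff (damped s (fun x => √(s x) • f x) (damping N m u)) c m =
        fourierCoeffOn (zero_lt_one' ℝ)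
          (fun p => √(2 * N) • damped s (fun x => √(s x) • f x) (damping N m u) (c, p)) m := by
    exact (fourierCoeffOn.const_smul
      (fun p => damped s (fun x => √(s x) • f x) (damping N m u) (c, p)) (√(2 * N) : ℂ) m
      (zero_lt_one' ℝ)).symm
  simp only [smul_coeff]
  rw [integral_fourierCoeffOn _ ((integrable_damped_damping hs hσ hσs hg hN c m).smul (√(2 * N)))]
  simp only [integral_damped_damping hN m ((mul_pos two_pos hσ).trans_le (hσs _)), momentumCoeff]

lemma integrable_momentumCoeff_damping (hs : SmoothPeriodic s) (hσ : 0 < σ)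
    (hσs : ∀ x, 2 * σ ≤ s x) (hg : SmoothPeriodic g) (hN : 0 < N) (m : ℤ) {y : ℝ → ℝ}
    (hy : Continuous y) :
    Integrable fun u => √(2 * N) • momentumCoeff (damped s g (damping N m u)) (y u) m := by
  obtain ⟨C, hC0, hC⟩ := (isDampedAmplitude_damped hg).exists_norm_le hσ hσs
  have gaussian : Integrable fun u : ℝ => C * Real.exp (-(2 * Real.pi * N * σ) * u ^ 2) :=
    (integrable_exp_neg_mul_sq (by positivity)).const_mul C
  have continuous_coeff :
      Continuous fun u => momentumCoeff (damped s g (damping N m u)) (y u) m :=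
    continuous_fourierCoeffOn _ ((continuous_damped hs.continuous hg.continuous).comp
      (((continuous_damping N m).comp continuous_fst).prodMk
        ((hy.comp continuous_fst).prodMk continuous_snd))) m
  refine (gaussian.mono' continuous_coeff.aestronglyMeasurable
    (.of_forall fun u => ?_)).smul (√(2 * N))
  exact (norm_momentumCoeff_le (fun p => hC _ _ (damping_nonneg hN m u)) m).trans
    (mul_le_mul_of_nonneg_left (exp_neg_mul_damping_le hN hσ.le m u) hC0)

-- The odd part of the shift cancels under `u ↦ -u`, so only second differences contribute.
lemma norm_integral_add_sub_integral_le {E : Type*} [NormedAddCommGroup E] [NormedSpace ℝ E]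
    {H : ℝ → ℝ → E} (heven : ∀ u q, H (-u) q = H u q) {c : ℝ}
    (hshift : Integrable fun u => H u (c + u)) (hcenter : Integrable fun u => H u c)
    {b : ℝ → ℝ} (hb : Integrable b)
    (hdiff : ∀ u, ‖H u (c + u) + H u (c - u) - (2 : ℝ) • H u c‖ ≤ b u) :
    ‖(∫ u, H u (c + u)) - ∫ u, H u c‖ ≤ (∫ u, b u) / 2 := by
  have reflect : (fun u => H u (c - u)) = fun u => (fun u => H u (c + u)) (-u) := by
    ext u
    simp [heven, sub_eq_add_neg]
  have hreflect : Integrable fun u => H u (c - u) := reflect ▸ hshift.comp_neg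
  have symmetrized : ∫ u, (H u (c + u) + H u (c - u) - (2 : ℝ) • H u c) =
      (2 : ℝ) • ((∫ u, H u (c + u)) - ∫ u, H u c) := by
    rw [integral_sub (hshift.fun_add hreflect) (hcenter.fun_smul _),
      integral_add hshift hreflect, reflect, integral_neg_eq_self (fun u => H u (c + u)),
      integral_smul, ← two_smul ℝ, smul_sub]
  have bound := norm_integral_le_of_norm_le hb (.of_forall hdiff)
  rw [symmetrized, norm_smul, Real.norm_ofNat] at bound
  linarith

lemma exists_norm_antiWickKernel_sub_damped_le (hs : SmoothPeriodic s) (hσ : 0 < σ)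
    (hσs : ∀ x, 2 * σ ≤ s x) (hg : SmoothPeriodic fun x => √(s x) • f x) :
    ∃ C : ℝ, 0 ≤ C ∧ ∀ N c (m : ℤ), 0 < N → (1 + (m : ℝ) ^ 2) * ‖antiWickKernel s f N c m -
      momentumCoeff (damped s f (Real.pi * m ^ 2 / (2 * N))) c m‖ ≤ C / N := by
  obtain ⟨C, hC0, hC⟩ := (isDampedAmplitude_damped hg).exists_second_difference_le hs hσ hσs
  refine ⟨C * √(2 / σ) / (2 * Real.pi * σ), by positivity, fun N c m hN => ?_⟩
  have hm : 0 < 1 + (m : ℝ) ^ 2 := by positivity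
  set κ := Real.pi * N * σ with hκ_def
  have hκ : 0 < κ := by positivity
  set A := √(2 * N) * (C * κ⁻¹ / (1 + (m : ℝ) ^ 2)) with hA_def
  rw [← integral_momentumCoeff_damping hs hσ hσs hg hN, antiWickKernel]
  have average_le := norm_integral_add_sub_integral_le
    (H := fun u q => √(2 * N) • momentumCoeff
      (damped s (fun x => √(s x) • f x) (damping N m u)) q m)
    (b := fun u => A * Real.exp (-κ * u ^ 2)) (fun u q => by rw [damping_neg])
    (integrable_momentumCoeff_damping hs hσ hσs hg hN m (continuous_const_add c))
    (integrable_momentumCoeff_damping hs hσ hσs hg hN m continuous_const)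
    ((integrable_exp_neg_mul_sq hκ).const_mul A) fun u => by
      rw [smul_comm (2 : ℝ), ← smul_add, ← smul_sub, norm_smul,
        Real.norm_of_nonneg (Real.sqrt_nonneg _), hA_def, mul_assoc]
      refine mul_le_mul_of_nonneg_left ?_ (Real.sqrt_nonneg _)
      rw [div_mul_eq_mul_div, le_div_iff₀' hm, mul_assoc C]
      refine (hC _ c u m (damping_nonneg hN m u)).trans ?_
      rw [mul_assoc]
      exact mul_le_mul_of_nonneg_left (sq_mul_exp_neg_mul_damping_le hN hσ m u) hC0
  rw [integral_const_mul, integral_gaussian] at average_le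
  have sqrt_mul_sqrt : √(2 * N) * √(Real.pi / κ) = √(2 / σ) := by
    rw [← Real.sqrt_mul (by positivity), hκ_def]
    congr 1
    field_simp
  calc _ ≤ (1 + (m : ℝ) ^ 2) * (A * √(Real.pi / κ) / 2) := by gcongr
    _ = C * κ⁻¹ / 2 * (√(2 * N) * √(Real.pi / κ)) := by rw [hA_def]; field_simp
    _ = C * √(2 / σ) / (2 * Real.pi * σ) / N := by rw [sqrt_mul_sqrt, hκ_def]; field_simp

theorem exists_norm_antiWickKernel_sub_le (hs : SmoothPeriodic s) (hpos : ∀ x, 0 < s x)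
    (hf : SmoothPeriodic f) :
    ∃ C : ℝ, 0 ≤ C ∧ ∀ N c (m : ℤ), 0 < N →
      (1 + (m : ℝ) ^ 2) * ‖antiWickKernel s f N c m - momentumCoeff f c m‖ ≤ C / N := by
  obtain ⟨σ, hσ, hσs⟩ := hs.exists_pos_two_mul_le hpos
  obtain ⟨A, hA0, hA⟩ :=
    exists_norm_antiWickKernel_sub_damped_le hs hσ hσs (hs.sqrt_smul hpos hf)
  obtain ⟨B, hB0, hB⟩ :=
    exists_norm_momentumCoeff_damped_sub_le hs hσ hσs hf
  have undamp (N c : ℝ) (m : ℤ) (hN : 0 < N) : (1 + (m : ℝ) ^ 2) *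
      ‖momentumCoeff (damped s f (Real.pi * m ^ 2 / (2 * N))) c m - momentumCoeff f c m‖
        ≤ B * (Real.pi / 2) / N := by
    rcases eq_or_ne m 0 with rfl | hm
    · simp only [Int.cast_zero, ne_eq, OfNat.ofNat_ne_zero, not_false_eq_true, zero_pow, mul_zero,
        zero_div, damped_zero, sub_self, norm_zero]
      positivity
    · refine le_of_mul_le_mul_left ?_ (by positivity : 0 < (m : ℝ) ^ 2)
      rw [← mul_assoc]
      refine (hB _ c m (by positivity)).trans_eq ?_
      field_simp
  refine ⟨A + B * (Real.pi / 2), by positivity, fun N c m hN => ?_⟩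
  rw [add_div]
  refine le_trans ?_ (add_le_add (hA N c m hN) (undamp N c m hN))
  rw [← mul_add]
  gcongr
  exact norm_sub_le_norm_sub_add_norm_sub _ _ _

end GaussianAveraging

section SchurTest

theorem norm_le_sqrt_of_schur {𝕜 ι κ : Type*} [RCLike 𝕜] [Fintype ι] [Fintype κ] [DecidableEq κ]
    (A : EuclideanSpace 𝕜 κ →L[𝕜] EuclideanSpace 𝕜 ι) {b : ι → κ → ℝ} {R C : ℝ}
    (hR : 0 ≤ R) (hentry : ∀ i k, ‖A (EuclideanSpace.single k 1) i‖ ≤ b i k)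
    (hrow : ∀ i, ∑ k, b i k ≤ R) (hcol : ∀ k, ∑ i, b i k ≤ C) : ‖A‖ ≤ √(R * C) := by
  have hb (i : ι) (k : κ) : 0 ≤ b i k := (norm_nonneg _).trans (hentry i k)
  have hb_sq (u : EuclideanSpace 𝕜 κ) (i : ι) (k : κ) : 0 ≤ b i k * ‖u k‖ ^ 2 :=
    mul_nonneg (hb i k) (sq_nonneg _)
  have coordinate (u : EuclideanSpace 𝕜 κ) (i : ι) :
      A u i = ∑ k, u k * A (EuclideanSpace.single k 1) i := by
    conv_lhs => rw [← (EuclideanSpace.basisFun κ 𝕜).sum_repr u]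
    simp [map_sum]
  have coordinate_sq_le (u : EuclideanSpace 𝕜 κ) (i : ι) :
      ‖A u i‖ ^ 2 ≤ R * ∑ k, b i k * ‖u k‖ ^ 2 :=
    calc ‖A u i‖ ^ 2 ≤ (∑ k, b i k * ‖u k‖) ^ 2 := by
          rw [coordinate]
          gcongr
          refine norm_sum_le_of_le _ fun k _ => ?_
          rw [norm_mul, mul_comm]
          exact mul_le_mul_of_nonneg_right (hentry i k) (norm_nonneg _)
      _ ≤ (∑ k, b i k) * ∑ k, b i k * ‖u k‖ ^ 2 :=
          Finset.sum_sq_le_sum_mul_sum_of_sq_le_mul _ (fun k _ => hb i k) (fun k _ => hb_sq u i k)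
            fun k _ => by rw [mul_pow, sq (b i k), mul_assoc]
      _ ≤ R * ∑ k, b i k * ‖u k‖ ^ 2 :=
          mul_le_mul_of_nonneg_right (hrow i) (Finset.sum_nonneg fun k _ => hb_sq u i k)
  refine A.opNorm_le_bound (Real.sqrt_nonneg _) fun u => ?_
  rw [← Real.sqrt_sq (norm_nonneg u), ← Real.sqrt_mul' _ (sq_nonneg _)]
  refine Real.le_sqrt_of_sq_le ?_
  simp only [EuclideanSpace.norm_sq_eq]
  calc ∑ i, ‖A u i‖ ^ 2 ≤ ∑ i, R * ∑ k, b i k * ‖u k‖ ^ 2 :=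
        Finset.sum_le_sum fun i _ => coordinate_sq_le u i
    _ = R * ∑ k, (∑ i, b i k) * ‖u k‖ ^ 2 := by
        rw [← Finset.mul_sum, Finset.sum_comm]
        simp only [Finset.sum_mul]
    _ ≤ R * ∑ k, C * ‖u k‖ ^ 2 := by
        gcongr with k
        exact hcol k
    _ = R * C * ∑ k, ‖u k‖ ^ 2 := by rw [← Finset.mul_sum, mul_assoc]

variable {N : ℕ} [NeZero N]

lemma summable_comp_add_mul {E : Type*} [NormedAddCommGroup E] [CompleteSpace E] {f : ℤ → E}
    (hf : Summable f) (a : ℤ) : Summable fun μ : ℤ => f (a + N * μ) :=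
  hf.comp_injective fun _ _ h =>
    mul_left_cancel₀ (Int.natCast_ne_zero.2 (NeZero.ne N)) (add_left_cancel h)

lemma sum_tsum_residues {E : Type*} [NormedAddCommGroup E] [CompleteSpace E] {f : ℤ → E}
    (hf : Summable f) : ∑ j : Fin N, ∑' μ : ℤ, f (j + N * μ) = ∑' m, f m := by
  have pairs := hf.hasSum
  rw [← (Int.divModEquiv N).symm.hasSum_iff, ← (Equiv.prodComm (Fin N) ℤ).hasSum_iff] at pairs
  refine (hasSum_fintype _).unique (pairs.prod_fiberwise fun j => ?_)
  simpa [comp_def, add_comm, mul_comm] using (summable_comp_add_mul hf (j : ℤ)).hasSum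

lemma norm_le_tsum_of_periodized {𝕜 : Type*} [RCLike 𝕜] {w : ℤ → ℝ} (hw : Summable w)
    (hw_nonneg : ∀ m, 0 ≤ w m) (A : EuclideanSpace 𝕜 (Fin N) →L[𝕜] EuclideanSpace 𝕜 (Fin N))
    (hentry : ∀ i k : Fin N,
      ‖A (EuclideanSpace.single k 1) i‖ ≤ ∑' μ : ℤ, w (k - i + N * μ)) :
    ‖A‖ ≤ ∑' m, w m := by
  have row (i : Fin N) : ∑ k : Fin N, ∑' μ : ℤ, w (k - i + N * μ) = ∑' m, w m := by
    refine Eq.trans ?_ ((sum_tsum_residues (N := N)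
      ((Equiv.subRight (i : ℤ)).summable_iff.2 hw)).trans ((Equiv.subRight (i : ℤ)).tsum_eq w))
    simp only [comp_apply, Equiv.subRight_apply, add_sub_right_comm]
  have col (k : Fin N) : ∑ i : Fin N, ∑' μ : ℤ, w (k - i + N * μ) = ∑' m, w m := by
    refine Eq.trans ?_ ((sum_tsum_residues (N := N)
      ((Equiv.subLeft (k : ℤ)).summable_iff.2 hw)).trans ((Equiv.subLeft (k : ℤ)).tsum_eq w))
    refine Finset.sum_congr rfl fun i _ => ?_
    rw [← (Equiv.neg ℤ).tsum_eq]
    simp only [comp_apply, Equiv.subLeft_apply, Equiv.neg_apply, mul_neg, ← sub_eq_add_neg,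
      sub_sub]
  exact (norm_le_sqrt_of_schur A (tsum_nonneg hw_nonneg) hentry (fun i => (row i).le)
    fun k => (col k).le).trans_eq (Real.sqrt_mul_self (tsum_nonneg hw_nonneg))

lemma summable_inv_one_add_sq : Summable fun m : ℤ => (1 + (m : ℝ) ^ 2)⁻¹ := by
  refine .of_norm_bounded_eventually (Real.summable_one_div_int_pow.2 one_lt_two) ?_
  filter_upwards [(Set.finite_singleton (0 : ℤ)).compl_mem_cofinite] with m hm
  have : (m : ℝ) ≠ 0 := Int.cast_ne_zero.2 hm
  rw [Real.norm_of_nonneg (by positivity), ← one_div]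
  gcongr
  linarith

end SchurTest

section CoherentStates

variable {N : ℕ} {s : ℝ × ℝ → ℝ} {f : ℝ × ℝ → ℂ} {σ : ℝ}

/-- The modulus of a plane coherent state with squeezing `s`, at distance `t` from its center. -/
noncomputable def gaussianAmplitude (N : ℕ) (s t : ℝ) : ℝ :=
  (2 * N * s) ^ (1 / 4 : ℝ) * Real.exp (-(Real.pi * N * s * t ^ 2))

lemma planeCS_eq (hN : N ≠ 0) (x : ℝ × ℝ) (s a : ℝ) :
    planeCS N x s a = gaussianAmplitude N s (a - x.1) *
      Complex.exp ((Real.pi * N * x.2 * (2 * a - x.1) : ℝ) * Complex.I) := by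
  have hN' : (N : ℂ) ≠ 0 := Nat.cast_ne_zero.2 hN
  have hπ : (Real.pi : ℂ) ≠ 0 := Complex.ofReal_ne_zero.2 Real.pi_ne_zero
  have base : s / (Real.pi * hbar N) = 2 * N * s := by
    have : (N : ℝ) ≠ 0 := Nat.cast_ne_zero.2 hN
    unfold hbar
    field_simp
  rw [planeCS, gaussianAmplitude, base, Complex.ofReal_mul, Complex.ofReal_exp]
  simp only [mul_assoc (Complex.ofReal _), ← Complex.exp_add]
  congr 2
  unfold hbar
  push_cast
  field_simp
  ring

lemma norm_planeCS (hN : N ≠ 0) (x : ℝ × ℝ) {s : ℝ} (hs : 0 ≤ s) (a : ℝ) :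
    ‖planeCS N x s a‖ = gaussianAmplitude N s (a - x.1) := by
  have nonneg : 0 ≤ gaussianAmplitude N s (a - x.1) := by
    unfold gaussianAmplitude
    positivity
  rw [planeCS_eq hN, norm_mul, Complex.norm_exp_ofReal_mul_I, mul_one, Complex.norm_real,
    Real.norm_of_nonneg nonneg]

lemma continuous_planeCS (N : ℕ) (hs : Continuous s) (a : ℝ) :
    Continuous fun x => planeCS N x (s x) a := by
  have continuous_prefactor : Continuous fun x => (s x / (Real.pi * hbar N)) ^ (1 / 4 : ℝ) :=
    (hs.div_const _).rpow_const fun _ => .inr (by norm_num)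
  unfold planeCS
  fun_prop

-- `(a - q)² + (b - q)² = 2 (q - (a + b) / 2)² + (b - a)² / 2` separates the two damping terms.
lemma mul_planeCS_mul_conj (hN : N ≠ 0) {x : ℝ × ℝ} (hx : 0 < s x) {a b : ℝ} {m : ℤ}
    (hm : b - a = m / N) :
    f x * (planeCS N x (s x) a * (starRingEnd ℂ) (planeCS N x (s x) b)) =
      √(2 * N) • (Complex.exp (-(2 * Real.pi * Complex.I * m * x.2)) *
        damped s (fun x => √(s x) • f x) (damping N m (x.1 - (a + b) / 2)) x) := by
  have hN' : (N : ℝ) ≠ 0 := Nat.cast_ne_zero.2 hN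
  have hm' : (m : ℝ) = N * (b - a) := by rw [hm]; field_simp
  have prefactor : (2 * N * s x) ^ (1 / 4 : ℝ) * (2 * N * s x) ^ (1 / 4 : ℝ) =
      √(2 * N) * √(s x) := by
    rw [← Real.sqrt_mul (by positivity), Real.sqrt_eq_rpow, ← Real.rpow_add (by positivity)]
    norm_num
  have amplitude : gaussianAmplitude N (s x) (a - x.1) * gaussianAmplitude N (s x) (b - x.1) =
      √(2 * N) * √(s x) * Real.exp (-(damping N m (x.1 - (a + b) / 2) * s x)) := by
    rw [gaussianAmplitude, gaussianAmplitude, mul_mul_mul_comm, prefactor, ← Real.exp_add, damping,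
      hm']
    congr 2
    field_simp
    ring
  have phase : Complex.exp ((Real.pi * N * x.2 * (2 * a - x.1) : ℝ) * Complex.I) *
      (starRingEnd ℂ) (Complex.exp ((Real.pi * N * x.2 * (2 * b - x.1) : ℝ) * Complex.I)) =
        Complex.exp (-(2 * Real.pi * Complex.I * m * x.2)) := by
    rw [← Complex.exp_conj, map_mul, Complex.conj_ofReal, Complex.conj_I, ← Complex.exp_add,
      ← Complex.ofReal_intCast m, hm']
    congr 1
    push_cast
    ring
  rw [planeCS_eq hN, planeCS_eq hN, map_mul, Complex.conj_ofReal, mul_mul_mul_comm, phase,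
    ← Complex.ofReal_mul, amplitude, damped]
  simp only [Complex.real_smul]
  push_cast
  ring

lemma summable_exp_neg_mul_int_sq {κ : ℝ} (hκ : 0 < κ) :
    Summable fun n : ℤ => Real.exp (-(κ * (n : ℝ) ^ 2)) := by
  refine (HurwitzZeta.hasSum_int_evenKernel 0 (div_pos hκ Real.pi_pos)).summable.congr fun n => ?_
  congr 1
  have := Real.pi_ne_zero
  field_simp
  ring

lemma exists_summable_norm_planeCS_le (hN : N ≠ 0) (hσ : 0 < σ) (M : ℝ) :
    ∃ b : ℤ → ℝ, Summable b ∧ ∀ {x : ℝ × ℝ} {s t : ℝ} (ν : ℤ), σ ≤ s → s ≤ M → |t - x.1| ≤ 1 →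
      ‖planeCS N x s (t + ν)‖ ≤ b ν := by
  set κ := Real.pi * N * σ with hκ_def
  have hκ : 0 < κ := by positivity
  have summable_bound : Summable fun ν : ℤ =>
      (2 * N * M) ^ (1 / 4 : ℝ) * Real.exp (κ - κ / 2 * (ν : ℝ) ^ 2) := by
    simp only [sub_eq_add_neg, Real.exp_add]
    exact ((summable_exp_neg_mul_int_sq (half_pos hκ)).mul_left _).mul_left _
  refine ⟨_, summable_bound, fun {x s t} ν hσs hsM ht => ?_⟩
  have hs : 0 < s := hσ.trans_le hσs
  have hM : 0 < M := hs.trans_le hsM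
  have shift_sq_ge : (ν : ℝ) ^ 2 / 2 - 1 ≤ (t + ν - x.1) ^ 2 := by
    have := (sq_le_one_iff_abs_le_one _).2 ht
    nlinarith [sq_nonneg ((ν : ℝ) + 2 * (t - x.1))]
  have exponent_ge : κ * ((ν : ℝ) ^ 2 / 2 - 1) ≤ Real.pi * N * s * (t + ν - x.1) ^ 2 :=
    calc κ * ((ν : ℝ) ^ 2 / 2 - 1) ≤ κ * (t + ν - x.1) ^ 2 := by gcongr
      _ ≤ Real.pi * N * s * (t + ν - x.1) ^ 2 := by rw [hκ_def]; gcongr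
  rw [norm_planeCS hN x hs.le, gaussianAmplitude]
  gcongr
  linarith

/-- The fundamental domain `[0,1)²` of the torus `ℝ²/ℤ²`. -/
def unitSquare : Set (ℝ × ℝ) := Ico 0 1 ×ˢ Ico 0 1

lemma unitSquare_subset_Icc : unitSquare ⊆ Icc 0 1 := by
  rw [Icc_prod_eq]
  exact prod_mono Ico_subset_Icc_self Ico_subset_Icc_self

lemma measurableSet_unitSquare : MeasurableSet unitSquare :=
  measurableSet_Ico.prod measurableSet_Ico

lemma volume_unitSquare : volume unitSquare = 1 := by
  simp [unitSquare, Measure.volume_eq_prod, Measure.prod_prod]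

lemma integrableOn_unitSquare {E : Type*} [NormedAddCommGroup E] {g : ℝ × ℝ → E}
    (hg : ContinuousOn g (Icc 0 1)) : IntegrableOn g unitSquare :=
  (hg.integrableOn_compact isCompact_Icc).mono_set unitSquare_subset_Icc

lemma setIntegral_unitSquare {g : ℝ × ℝ → ℂ} (hg : IntegrableOn g unitSquare) :
    ∫ x in unitSquare, g x = ∫ q in (0 : ℝ)..1, ∫ p in (0 : ℝ)..1, g (q, p) := by
  rw [unitSquare, Measure.volume_eq_prod] at *
  rw [setIntegral_prod _ hg]
  simp only [integral_Ico_eq_integral_Ioc, intervalIntegral.integral_of_le zero_le_one]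

lemma exists_summable_norm_planeCS_le_of_mem_Icc (hN : N ≠ 0) (hs : Continuous s)
    (hpos : ∀ x, 0 < s x) :
    ∃ b : ℤ → ℝ, Summable b ∧ ∀ x ∈ Icc (0 : ℝ × ℝ) 1, ∀ t ∈ Icc (0 : ℝ) 1, ∀ ν : ℤ,
      ‖planeCS N x (s x) (t + ν)‖ ≤ b ν := by
  obtain ⟨y, -, hy⟩ := (isCompact_Icc (a := (0 : ℝ × ℝ)) (b := 1)).exists_isMinOn
    (nonempty_Icc.2 zero_le_one) hs.continuousOn
  obtain ⟨z, -, hz⟩ := (isCompact_Icc (a := (0 : ℝ × ℝ)) (b := 1)).exists_isMaxOn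
    (nonempty_Icc.2 zero_le_one) hs.continuousOn
  obtain ⟨b, hb, hle⟩ := exists_summable_norm_planeCS_le hN (hpos y) (s z)
  exact ⟨b, hb, fun x hx t ht ν =>
    hle ν (hy hx) (hz hx) (Real.dist_le_of_mem_Icc_01 ht ⟨hx.1.1, hx.2.1⟩)⟩

lemma div_natCast_mem_Icc (i : Fin N) : ((i : ℕ) : ℝ) / N ∈ Icc (0 : ℝ) 1 :=
  ⟨by positivity, div_le_one_of_le₀ (by exact_mod_cast i.2.le) (by positivity)⟩

lemma continuousOn_torusCS (hN : N ≠ 0) (hs : Continuous s) (hpos : ∀ x, 0 < s x) :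
    ContinuousOn (fun x => torusCS N x (s x)) (Icc 0 1) := by
  obtain ⟨b, hb, hle⟩ := exists_summable_norm_planeCS_le_of_mem_Icc hN hs hpos
  refine (PiLp.continuous_toLp 2 (fun _ : Fin N => ℂ)).comp_continuousOn
    (continuousOn_pi.2 fun i => continuousOn_const.mul ?_)
  exact continuousOn_tsum (fun ν => (continuous_planeCS N hs _).continuousOn) hb
    fun ν x hx => hle x hx _ (div_natCast_mem_Icc i) ν

lemma natCast_mul_rpow_neg_half_mul_self (hN : N ≠ 0) :
    (N : ℂ) * (((N : ℝ) ^ (-(1 / 2) : ℝ) : ℝ) * ((N : ℝ) ^ (-(1 / 2) : ℝ) : ℝ)) = 1 := by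
  have : (N : ℝ) * ((N : ℝ) ^ (-(1 / 2) : ℝ) * (N : ℝ) ^ (-(1 / 2) : ℝ)) = 1 := by
    rw [← Real.rpow_add (by positivity), ← neg_add, add_halves, Real.rpow_neg_one,
      mul_inv_cancel₀ (Nat.cast_ne_zero.2 hN)]
  exact_mod_cast this

lemma hasSum_mul_conj {ι κ : Type*} {φ : ι → ℂ} {χ : κ → ℂ} (hφ : Summable fun n => ‖φ n‖)
    (hχ : Summable fun n => ‖χ n‖) :
    HasSum (fun z : ι × κ => φ z.1 * (starRingEnd ℂ) (χ z.2))
      ((∑' n, φ n) * (starRingEnd ℂ) (∑' n, χ n)) := by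
  have hχ_conj : Summable fun n => ‖(starRingEnd ℂ) (χ n)‖ := by
    simpa only [RCLike.norm_conj] using hχ
  rw [Complex.conj_tsum, tsum_mul_tsum_of_summable_norm hφ hχ_conj]
  exact (summable_mul_of_summable_norm hφ hχ_conj).hasSum

lemma hasSum_torusCS_mul_conj (hN : N ≠ 0) {x : ℝ × ℝ} {s : ℝ} {i k : Fin N}
    (hi : Summable fun ν : ℤ => ‖planeCS N x s ((i : ℕ) / N + ν)‖)
    (hk : Summable fun ν : ℤ => ‖planeCS N x s ((k : ℕ) / N + ν)‖) :
    HasSum (fun z : ℤ × ℤ => planeCS N x s ((i : ℕ) / N + z.1) *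
        (starRingEnd ℂ) (planeCS N x s ((k : ℕ) / N + z.2)))
      (N * (torusCS N x s i * (starRingEnd ℂ) (torusCS N x s k))) := by
  have product := hasSum_mul_conj hi hk
  rwa [torusCS, WithLp.equiv_symm_apply, map_mul, Complex.conj_ofReal, mul_mul_mul_comm,
    ← mul_assoc, natCast_mul_rpow_neg_half_mul_self hN, one_mul]

lemma continuous_rankOne {E : Type*} [NormedAddCommGroup E] [InnerProductSpace ℂ E] :
    Continuous (rankOne : E → E →L[ℂ] E) :=
  ((ContinuousLinearMap.smulRightL ℂ E E).continuous.comp (innerSL ℂ).continuous).clm_apply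
    continuous_id

lemma rankOne_single {ι : Type*} [Fintype ι] [DecidableEq ι] (ψ : EuclideanSpace ℂ ι) (i k : ι) :
    rankOne ψ (EuclideanSpace.single k 1) i = ψ i * (starRingEnd ℂ) (ψ k) := by
  simp [rankOne, EuclideanSpace.inner_single_right, mul_comm]

lemma opAW_single (hN : N ≠ 0) (hs : Continuous s) (hpos : ∀ x, 0 < s x) (hf : Continuous f)
    (i k : Fin N) :
    opAW N s f (EuclideanSpace.single k 1) i = ∫ x in unitSquare,
      f x * (N * (torusCS N x (s x) i * (starRingEnd ℂ) (torusCS N x (s x) k))) := by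
  have integrable : IntegrableOn (fun x => f x • rankOne (torusCS N x (s x))) unitSquare :=
    integrableOn_unitSquare
      (hf.continuousOn.smul
        (continuous_rankOne.comp_continuousOn (continuousOn_torusCS hN hs hpos)))
  let entry : (EuclideanSpace ℂ (Fin N) →L[ℂ] EuclideanSpace ℂ (Fin N)) →L[ℂ] ℂ :=
    (EuclideanSpace.proj i : EuclideanSpace ℂ (Fin N) →L[ℂ] ℂ).comp
      (ContinuousLinearMap.apply ℂ _ (EuclideanSpace.single k 1))
  calc opAW N s f (EuclideanSpace.single k 1) i
      = N * entry (∫ x in unitSquare, f x • rankOne (torusCS N x (s x))) := by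
        exact map_smul entry (N : ℂ) _
    _ = ∫ x in unitSquare,
          N * (f x * rankOne (torusCS N x (s x)) (EuclideanSpace.single k 1) i) := by
        rw [← entry.integral_comp_comm integrable, ← integral_const_mul]
        rfl
    _ = _ := by simp only [rankOne_single, mul_left_comm (N : ℂ)]

lemma hasSum_opAW_single (hN : N ≠ 0) (hs : Continuous s) (hpos : ∀ x, 0 < s x)
    (hf : Continuous f) (i k : Fin N) :
    HasSum (fun z : ℤ × ℤ => ∫ x in unitSquare, f x * (planeCS N x (s x) ((i : ℕ) / N + z.1) *
        (starRingEnd ℂ) (planeCS N x (s x) ((k : ℕ) / N + z.2))))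
      (opAW N s f (EuclideanSpace.single k 1) i) := by
  obtain ⟨b, hb, hle⟩ := exists_summable_norm_planeCS_le_of_mem_Icc hN hs hpos
  obtain ⟨C, hC⟩ := (isCompact_Icc (a := (0 : ℝ × ℝ)) (b := 1)).exists_bound_of_continuousOn
    hf.continuousOn
  have mem_Icc : ∀ᵐ x ∂volume.restrict unitSquare, x ∈ Icc (0 : ℝ × ℝ) 1 :=
    ae_restrict_of_forall_mem measurableSet_unitSquare unitSquare_subset_Icc
  have norm_le {x : ℝ × ℝ} (hx : x ∈ Icc 0 1) (j : Fin N) (ν : ℤ) :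
      ‖planeCS N x (s x) ((j : ℕ) / N + ν)‖ ≤ b ν := hle x hx _ (div_natCast_mem_Icc j) ν
  have hb_nonneg (ν : ℤ) : 0 ≤ b ν :=
    (norm_nonneg _).trans (norm_le (left_mem_Icc.2 zero_le_one) i ν)
  have summable {x : ℝ × ℝ} (hx : x ∈ Icc 0 1) (j : Fin N) :
      Summable fun ν : ℤ => ‖planeCS N x (s x) ((j : ℕ) / N + ν)‖ :=
    hb.of_nonneg_of_le (fun _ => norm_nonneg _) (norm_le hx j)
  rw [opAW_single hN hs hpos hf]
  refine hasSum_integral_of_dominated_convergence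
    (fun (z : ℤ × ℤ) _ => C * (b z.1 * b z.2)) (fun z => ?_) (fun z => ?_)
    (.of_forall fun _ => (hb.mul_of_nonneg hb hb_nonneg hb_nonneg).mul_left C) ?_ ?_
  · exact (hf.mul ((continuous_planeCS N hs _).mul
      (Complex.continuous_conj.comp (continuous_planeCS N hs _)))).aestronglyMeasurable
  · filter_upwards [mem_Icc] with x hx
    rw [norm_mul, norm_mul, RCLike.norm_conj]
    have := (norm_nonneg _).trans (hC x hx)
    gcongr
    exacts [hC x hx, hb_nonneg _, norm_le hx i _, norm_le hx k _]
  · exact integrableOn_const (by simp [volume_unitSquare])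
  · filter_upwards [mem_Icc] with x hx
    exact (hasSum_torusCS_mul_conj hN (summable hx i) (summable hx k)).mul_left _

lemma setIntegral_mul_planeCS_mul_conj (hN : N ≠ 0) (hs : Continuous s) (hpos : ∀ x, 0 < s x)
    (hf : Continuous f) {a b : ℝ} {m : ℤ} (hm : b - a = m / N) :
    ∫ x in unitSquare, f x * (planeCS N x (s x) a * (starRingEnd ℂ) (planeCS N x (s x) b)) =
      ∫ q in (0 : ℝ)..1, √(2 * N) •
        momentumCoeff (damped s (fun x => √(s x) • f x) (damping N m (q - (a + b) / 2))) q m := by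
  have continuous_integrand : Continuous fun x =>
      f x * (planeCS N x (s x) a * (starRingEnd ℂ) (planeCS N x (s x) b)) :=
    hf.mul ((continuous_planeCS N hs a).mul
      (Complex.continuous_conj.comp (continuous_planeCS N hs b)))
  rw [setIntegral_unitSquare (integrableOn_unitSquare continuous_integrand.continuousOn)]
  simp only [mul_planeCS_mul_conj hN (hpos _) hm, intervalIntegral.integral_smul,
    momentumCoeff_eq_integral]

-- The translates by `ν` unfold the integral over a period into an integral over the line.
lemma hasSum_antiWickKernel (hN : N ≠ 0) (hs : SmoothPeriodic s) (hpos : ∀ x, 0 < s x)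
    (hf : SmoothPeriodic f) {a b : ℝ} {m : ℤ} (hm : b - a = m / N) :
    HasSum (fun ν : ℤ => ∫ x in unitSquare, f x * (planeCS N x (s x) (a + ν) *
        (starRingEnd ℂ) (planeCS N x (s x) (b + ν))))
      (antiWickKernel s f N ((a + b) / 2) m) := by
  have hN' : (0 : ℝ) < N := by positivity
  obtain ⟨σ, hσ, hσs⟩ := hs.exists_pos_two_mul_le hpos
  have hg := hs.sqrt_smul hpos hf
  set c := (a + b) / 2
  set Φ : ℝ → ℂ := fun u =>
    √(2 * N) • momentumCoeff (damped s (fun x => √(s x) • f x) (damping N m u)) (c + u) m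
  have integrable_Φ : Integrable Φ := integrable_momentumCoeff_damping hs hσ hσs hg hN' m
    (continuous_const_add c)
  have unfolded := (integrable_Φ.comp_sub_right c).hasSum_intervalIntegral_comp_add_int
  rw [integral_sub_right_eq_self Φ c, ← (Equiv.neg ℤ).hasSum_iff] at unfolded
  refine unfolded.congr_fun fun ν => ?_
  have translated : (b + ν) - (a + ν) = m / N := by rw [← hm]; ring
  have midpoint : (a + ν + (b + ν)) / 2 = c + ν := by ring
  rw [setIntegral_mul_planeCS_mul_conj hN hs.continuous hpos hf.continuous translated, midpoint]
  refine intervalIntegral.integral_congr fun q _ => ?_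
  have offset : q + ((Equiv.neg ℤ ν : ℤ) : ℝ) - c = q - (c + ν) := by
    rw [Equiv.neg_apply, Int.cast_neg]
    ring
  have position : c + (q - (c + ν)) = q - ν * 1 := by ring
  simp only [offset, position]
  exact congrArg (√(2 * N) • ·)
    (((hs.damped hg (damping N m (q - (c + ν)))).periodic_momentumCoeff m).sub_int_mul_eq ν).symm

lemma hasSum_opAW_single_antiWickKernel (hN : N ≠ 0) (hs : SmoothPeriodic s)
    (hpos : ∀ x, 0 < s x) (hf : SmoothPeriodic f) (i k : Fin N) :
    HasSum (fun μ : ℤ => antiWickKernel s f N (((i : ℕ) / N + ((k : ℕ) / N + μ)) / 2)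
      ((k : ℕ) - (i : ℕ) + N * μ)) (opAW N s f (EuclideanSpace.single k 1) i) := by
  have pairs := hasSum_opAW_single hN hs.continuous hpos hf.continuous i k
  rw [← (Equiv.prodShear (.refl ℤ) Equiv.addLeft).hasSum_iff, ← (Equiv.prodComm ℤ ℤ).hasSum_iff]
    at pairs
  refine pairs.prod_fiberwise fun μ => ?_
  have separation : ((k : ℕ) / N + μ : ℝ) - (i : ℕ) / N =
      (((k : ℕ) - (i : ℕ) + N * μ : ℤ) : ℝ) / N := by
    push_cast
    field_simp
    ring
  simpa [comp_def, add_assoc, add_comm] using hasSum_antiWickKernel hN hs hpos hf separation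

end CoherentStates

section Weyl

variable {s : ℝ × ℝ → ℝ} {f : ℝ × ℝ → ℂ}

/-- The torus Weyl quantization of `f`: its matrix elements are the momentum Fourier coefficients of
`f` at the midpoints of the pairs `(i / N, k / N + μ)`. -/
noncomputable def opWeyl (N : ℕ) (f : ℝ × ℝ → ℂ) :
    EuclideanSpace ℂ (Fin N) →L[ℂ] EuclideanSpace ℂ (Fin N) :=
  Matrix.toEuclideanCLM (𝕜 := ℂ) (.of fun i k : Fin N => ∑' μ : ℤ,
    momentumCoeff f (((i : ℕ) / N + ((k : ℕ) / N + μ)) / 2) ((k : ℕ) - (i : ℕ) + N * μ))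

lemma opWeyl_single (N : ℕ) (f : ℝ × ℝ → ℂ) (i k : Fin N) :
    opWeyl N f (EuclideanSpace.single k 1) i = ∑' μ : ℤ,
      momentumCoeff f (((i : ℕ) / N + ((k : ℕ) / N + μ)) / 2) ((k : ℕ) - (i : ℕ) + N * μ) := by
  simp [opWeyl]

theorem exists_norm_opAW_sub_opWeyl_le (hs : SmoothPeriodic s) (hpos : ∀ x, 0 < s x)
    (hf : SmoothPeriodic f) :
    ∃ C : ℝ, 0 ≤ C ∧ ∀ N : ℕ, N ≠ 0 → ‖opAW N s f - opWeyl N f‖ ≤ C / N := by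
  obtain ⟨C, hC0, hC⟩ := exists_norm_antiWickKernel_sub_le hs hpos hf
  set w : ℤ → ℝ := fun m => (1 + (m : ℝ) ^ 2)⁻¹
  have hw_nonneg (m : ℤ) : 0 ≤ w m := by positivity
  refine ⟨C * ∑' m, w m, mul_nonneg hC0 (tsum_nonneg hw_nonneg), fun N hN => ?_⟩
  have : NeZero N := ⟨hN⟩
  have kernel_sub_le (c : ℝ) (m : ℤ) :
      ‖antiWickKernel s f N c m - momentumCoeff f c m‖ ≤ C / N * w m := by
    rw [← div_eq_mul_inv, le_div_iff₀' (by positivity)]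
    exact hC N c m (by positivity)
  rw [mul_div_right_comm, ← tsum_mul_left]
  have summable_bound : Summable fun m => C / N * w m := summable_inv_one_add_sq.mul_left _
  refine norm_le_tsum_of_periodized summable_bound
    (fun m => mul_nonneg (by positivity) (hw_nonneg m)) _ fun i k => ?_
  have summable_row := summable_comp_add_mul (N := N) summable_bound (k - i)
  have hasSum_kernel := hasSum_opAW_single_antiWickKernel hN hs hpos hf i k
  have summable_sub := summable_row.of_norm_bounded fun μ =>
    kernel_sub_le (((i : ℕ) / N + ((k : ℕ) / N + μ)) / 2) (k - i + N * μ)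
  have summable_weyl := hasSum_kernel.summable.sub summable_sub
  simp only [sub_sub_cancel] at summable_weyl
  rw [sub_apply, PiLp.sub_apply, opWeyl_single, ← hasSum_kernel.tsum_eq,
    ← hasSum_kernel.summable.tsum_sub summable_weyl]
  exact tsum_of_norm_bounded summable_row.hasSum fun μ => kernel_sub_le _ _

end Weyl

end AntiWick

/-- Two anti-Wick quantizations with smooth positive periodic squeezing
functions `s₁, s₂` are `O(N⁻¹)`-close in operator norm on any smooth periodic observable. -/
theorem antiWick_quantizations_equivalent
    (s₁ s₂ : ℝ × ℝ → ℝ) (f : ℝ × ℝ → ℂ)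
    (hs₁ : ContDiff ℝ (⊤ : ℕ∞) s₁) (hs₂ : ContDiff ℝ (⊤ : ℕ∞) s₂) (hf : ContDiff ℝ (⊤ : ℕ∞) f)
    (hs₁pos : ∀ x, 0 < s₁ x) (hs₂pos : ∀ x, 0 < s₂ x)
    (hs₁per : ∀ x : ℝ × ℝ, s₁ (x.1 + 1, x.2) = s₁ x ∧ s₁ (x.1, x.2 + 1) = s₁ x)
    (hs₂per : ∀ x : ℝ × ℝ, s₂ (x.1 + 1, x.2) = s₂ x ∧ s₂ (x.1, x.2 + 1) = s₂ x)
    (hfper : ∀ x : ℝ × ℝ, f (x.1 + 1, x.2) = f x ∧ f (x.1, x.2 + 1) = f x) :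
    ∃ C : ℝ, 0 < C ∧ ∀ N : ℕ, 1 ≤ N → ‖opAW N s₁ f - opAW N s₂ f‖ ≤ C / N := by
  have hf_torus := AntiWick.SmoothPeriodic.of_coordinates hf hfper
  obtain ⟨C₁, hC₁, weyl₁⟩ := AntiWick.exists_norm_opAW_sub_opWeyl_le
    (.of_coordinates hs₁ hs₁per) hs₁pos hf_torus
  obtain ⟨C₂, hC₂, weyl₂⟩ := AntiWick.exists_norm_opAW_sub_opWeyl_le
    (.of_coordinates hs₂ hs₂per) hs₂pos hf_torus
  refine ⟨C₁ + C₂ + 1, by positivity, fun N hN => ?_⟩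
  have hN0 : N ≠ 0 := Nat.one_le_iff_ne_zero.1 hN
  calc ‖opAW N s₁ f - opAW N s₂ f‖
      ≤ ‖opAW N s₁ f - AntiWick.opWeyl N f‖ + ‖opAW N s₂ f - AntiWick.opWeyl N f‖ := by
        rw [norm_sub_rev (opAW N s₂ f)]
        exact norm_sub_le_norm_sub_add_norm_sub _ _ _
    _ ≤ C₁ / N + C₂ / N := add_le_add (weyl₁ N hN0) (weyl₂ N hN0)
    _ = (C₁ + C₂) / N := (add_div _ _ _).symm
    _ ≤ (C₁ + C₂ + 1) / N :=
        div_le_div_of_nonneg_right (le_add_of_nonneg_right zero_le_one) N.cast_nonneg
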